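/- Fix an integer n ≥ 1 and p ∈ (1,∞), and define the weight v = (Mw/w)^p · w on supp(w) (and v = 0 off supp(w)). Then there is a constant C = C(n,p) such that for every measurable function f supported in supp(w), ‖Mf‖_{L^p(w)} ≤ C ‖f‖_{L^p(v)}. -/

import Mathlib

open MeasureTheory Set ENNReal

noncomputable section

/-- The half-open axis-parallel cube with corner `a` and side length `l`. -/
def Cube (n : ℕ) (a : Fin n → ℝ) (l : ℝ) : Set (Fin n → ℝ) :=
  Set.univ.pi fun i => Set.Ico (a i) (a i + l)

/-- The uncentered Hardy–Littlewood maximal function over axis-parallel cubes: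
`Mg(x) = sup_{Q ∋ x} |Q|⁻¹ ∫_Q g`. -/
def MaxFn {n : ℕ} (g : (Fin n → ℝ) → ℝ≥0∞) (x : Fin n → ℝ) : ℝ≥0∞ :=
  ⨆ (a : Fin n → ℝ) (l : ℝ) (_ : 0 < l) (_ : x ∈ Cube n a l),
    (volume (Cube n a l))⁻¹ * ∫⁻ y in Cube n a l, g y

/-- The cube of the sparse family `S` with parameters `k, N`:
`[0, 2^{-N})^n` for `k = 0` and `[2^k, 2^k + 2^{-N})^n` for `k ≥ 1`. -/
def sCube (n k N : ℕ) : Set (Fin n → ℝ) :=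
  Cube n (fun _ => if k = 0 then 0 else (2:ℝ)^k) ((2:ℝ)^(-(N:ℤ)))

/-- The sparse operator `T_S g = Σ_{Q ∈ S} (|Q|⁻¹ ∫_Q g) 1_Q`. -/
def TS {n : ℕ} (g : (Fin n → ℝ) → ℝ≥0∞) (x : Fin n → ℝ) : ℝ≥0∞ :=
  ∑' q : ℕ × ℕ,
    (sCube n q.1 q.2).indicator
      (fun _ => (volume (sCube n q.1 q.2))⁻¹ * ∫⁻ y in sCube n q.1 q.2, g y) x

/-- The `j`-th digit (for `j ≥ 1`) of `t ∈ [0,1)` in base `2^k`, using the expansion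
which is not eventually constant `2^k - 1`. -/
def digit (k j : ℕ) (t : ℝ) : ℤ := ⌊t * 2^(k*j)⌋ % 2^k

/-- `Ω_m(k) ⊆ [0,1)^n`: the points all of whose coordinates have base-`2^k` digits
in `{0, …, 2^{k-1}-1}` for `1 ≤ j ≤ m-1`, with `m`-th digit equal to `2^{k-1}`. -/
def Omega (n k m : ℕ) : Set (Fin n → ℝ) :=
  {x | (∀ i, x i ∈ Set.Ico (0:ℝ) 1) ∧
    ∀ i, (∀ j, 1 ≤ j → j < m → digit k j (x i) < 2^(k-1)) ∧
      digit k m (x i) = 2^(k-1)}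

/-- The weight `w_k = Σ_{m ≥ 1} (2^{kn}/(2^{(k-1)n}+1))^m 1_{Ω_m(k)}`. -/
def wk (n k : ℕ) : (Fin n → ℝ) → ℝ≥0∞ := fun x =>
  ∑' m : ℕ,
    (Omega n k (m+1)).indicator
      (fun _ => ((2:ℝ≥0∞)^(k*n) / ((2:ℝ≥0∞)^((k-1)*n) + 1))^(m+1)) x

/-- `Q_1^m(k) = [2^{-k(m-1)-1}, 2^{-k(m-1)-1} + 2^{-km})^n`. -/
def Q1 (n k m : ℕ) : Set (Fin n → ℝ) :=
  Cube n (fun _ => (2:ℝ)^(-(k*(m-1) : ℤ) - 1)) ((2:ℝ)^(-(k*m : ℤ)))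

/-- `Γ(k) = ⋃_{m ≥ 3} Q_1^m(k)`. -/
def Gamma (n k : ℕ) : Set (Fin n → ℝ) := ⋃ m : ℕ, Q1 n k (m+3)

/-- `A_k = 2^{(k-1)n} (2^{(k-1)n}+1)^2`. -/
def Ak (n k : ℕ) : ℝ≥0∞ := 2^((k-1)*n) * (2^((k-1)*n) + 1)^2

/-- The weight `w(x) = Σ_{k ≥ 3} A_k w_k(x - 2⃗^k) 1_{Γ(k)}(x - 2⃗^k)`. -/
def bigW (n : ℕ) : (Fin n → ℝ) → ℝ≥0∞ := fun x =>
  ∑' k : ℕ,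
    (Gamma n (k+3)).indicator (fun z => Ak n (k+3) * wk n (k+3) z)
      (fun i => x i - (2:ℝ)^(k+3))

/-- The test function `f(x) = Σ_{k ≥ 3} k^{-ε} A_k w_k(x - 2⃗^k)`. -/
def bigF (n : ℕ) (ε : ℝ) : (Fin n → ℝ) → ℝ≥0∞ := fun x =>
  ∑' k : ℕ,
    ((k+3 : ℝ≥0∞) ^ (-ε)) * Ak n (k+3) * wk n (k+3) (fun i => x i - (2:ℝ)^(k+3))

/-- `T` is bounded from `L^p(v)` to `L^p(u)` (for nonnegative functions, which are
required to be supported in `supp v`): there is a finite constant `C` with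
`‖Tf‖_{L^p(u)} ≤ C ‖f‖_{L^p(v)}` for all `f ∈ L^p(v)`. -/
def BddOn {n : ℕ} (T : ((Fin n → ℝ) → ℝ≥0∞) → (Fin n → ℝ) → ℝ≥0∞)
    (p : ℝ) (v u : (Fin n → ℝ) → ℝ≥0∞) : Prop :=
  ∃ C : ℝ≥0∞, C ≠ ∞ ∧ ∀ f : (Fin n → ℝ) → ℝ≥0∞, Measurable f →
    (∀ x, v x = 0 → f x = 0) → (∫⁻ x, f x ^ p * v x) < ∞ →
    ∫⁻ x, T f x ^ p * u x ≤ C ^ p * ∫⁻ x, f x ^ p * v x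

/-- The dual weight `u^{1-p'} 1_{supp u}`. -/
def dualW {n : ℕ} (u : (Fin n → ℝ) → ℝ≥0∞) (q : ℝ) : (Fin n → ℝ) → ℝ≥0∞ :=
  fun x => if u x = 0 then 0 else u x ^ (1 - q)

theorem aux_exists_dyadic {a : ℝ≥0∞} (h0 : a ≠ 0) (ht : a ≠ ∞) :
    ∃ j : ℤ, (2:ℝ≥0∞) ^ (j:ℝ) < a ∧ a ≤ (2:ℝ≥0∞) ^ ((j:ℝ)+1) := by
  obtain ⟨j, h1, h2⟩ := ENNReal.exists_mem_Ioc_zpow h0 ht (y := 2) (by norm_num) (by norm_num)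
  refine ⟨j, by simpa [ENNReal.rpow_intCast] using h1, ?_⟩
  have : ((j:ℝ)+1) = ((j+1 : ℤ):ℝ) := by push_cast; ring
  rw [this, ENNReal.rpow_intCast]; exact h2

theorem aux_lower (p : ℝ) (hp : 0 < p) (a : ℝ≥0∞) :
    a ^ p ≤ ∑' j : ℤ, if (2:ℝ≥0∞) ^ ((j:ℝ)+1) < a then (2:ℝ≥0∞) ^ (((j:ℝ)+2)*p) else 0 := by
  by_cases h0 : a = 0
  · simp [h0, hp]
  by_cases ht : a = ∞
  · subst ht
    have key : ∀ N : ℕ, (2:ℝ≥0∞)^(((N:ℝ))*p) ≤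
        ∑' j : ℤ, if (2:ℝ≥0∞) ^ ((j:ℝ)+1) < ∞ then (2:ℝ≥0∞) ^ (((j:ℝ)+2)*p) else 0 := by
      intro N
      refine le_trans ?_ (ENNReal.le_tsum ((N:ℤ)-2))
      rw [if_pos (ENNReal.rpow_ne_top_of_ne_zero (by norm_num) (by norm_num)).lt_top]
      push_cast; simp
    have h1 : (1:ℝ≥0∞) < (2:ℝ≥0∞)^p := ENNReal.one_lt_rpow (by norm_num) hp
    have := ENNReal.tendsto_pow_atTop_nhds_top_iff.2 h1
    rw [ENNReal.top_rpow_of_pos hp]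
    refine le_of_tendsto' this fun N => ?_
    have := key N
    rwa [mul_comm, ENNReal.rpow_mul, ENNReal.rpow_natCast] at this
  obtain ⟨j, h1, h2⟩ := aux_exists_dyadic h0 ht
  refine le_trans ?_ (ENNReal.le_tsum (j-1))
  rw [if_pos]
  · push_cast
    rw [ENNReal.rpow_mul]
    refine ENNReal.rpow_le_rpow (h2.trans (le_of_eq ?_)) hp.le
    congr 1; ring
  · push_cast; simpa using h1

theorem aux_upper (q : ℝ) (hq : 0 < q) (a : ℝ≥0∞) :
    (∑' j : ℤ, if (2:ℝ≥0∞) ^ (j:ℝ) < a then (2:ℝ≥0∞) ^ ((j:ℝ)*q) else 0)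
      ≤ (1 - (2:ℝ≥0∞)^(-q))⁻¹ * a ^ q := by
  by_cases h0 : a = 0
  · simp [h0]
  by_cases ht : a = ∞
  · subst ht
    rw [ENNReal.top_rpow_of_pos hq, ENNReal.mul_top]
    · exact le_top
    · simp
  obtain ⟨J, h1, h2⟩ := aux_exists_dyadic h0 ht
  have hinj : Function.Injective (fun i : ℕ => J - (i:ℤ)) := by
    intro i j h; simpa using h
  rw [← hinj.tsum_eq]
  · rw [← ENNReal.tsum_geometric, ← ENNReal.tsum_mul_right]
    refine ENNReal.tsum_le_tsum fun i => ?_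
    split_ifs
    · calc (2:ℝ≥0∞) ^ (((J - (i:ℤ) : ℤ) : ℝ)*q) = ((2:ℝ≥0∞)^(-q))^i * ((2:ℝ≥0∞)^(J:ℝ))^q := by
            rw [← ENNReal.rpow_natCast, ← ENNReal.rpow_mul, ← ENNReal.rpow_mul,
              ← ENNReal.rpow_add _ _ (by norm_num) (by norm_num)]
            congr 1; push_cast; ring
        _ ≤ _ := by gcongr
    · exact zero_le
  · intro j hj
    simp only [Function.mem_support, ne_eq, ite_eq_right_iff, Classical.not_imp] at hj
    have : (j:ℝ) < (J:ℝ)+1 := by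
      by_contra hh
      push Not at hh
      exact absurd (hj.1.trans_le h2) (not_lt.2 (ENNReal.rpow_le_rpow_of_exponent_le (by norm_num) hh))
    have : j < J + 1 := by exact_mod_cast this
    refine ⟨(J - j).toNat, ?_⟩
    simp only; omega

/-- Averaging maximal operator attached to a family of sets. -/
def avgMax {α ι : Type*} [MeasurableSpace α] (μ : Measure α) (B : ι → Set α) (h : α → ℝ≥0∞)
    (x : α) : ℝ≥0∞ :=
  ⨆ (i : ι) (_ : x ∈ B i), (μ (B i))⁻¹ * ∫⁻ y in B i, h y ∂μ

theorem avgMax_split {α ι : Type*} [MeasurableSpace α] (μ : Measure α) (B : ι → Set α)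
    (h : α → ℝ≥0∞) (t : ℝ≥0∞) (x : α) :
    avgMax μ B h x ≤ avgMax μ B ({y | t < h y}.indicator h) x + t := by
  refine iSup₂_le fun i hi => ?_
  have h1 : ∫⁻ y in B i, h y ∂μ ≤ ∫⁻ y in B i, {y | t < h y}.indicator h y ∂μ + t * μ (B i) := by
    calc ∫⁻ y in B i, h y ∂μ ≤ ∫⁻ y in B i, ({y | t < h y}.indicator h y + t) ∂μ := by
          refine lintegral_mono fun y => ?_
          by_cases hy : t < h y
          · simp [hy]
          · simp only [indicator, mem_ofPred_eq, hy, if_false, zero_add]; exact not_lt.1 hy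
      _ = _ := by rw [lintegral_add_right _ measurable_const]; simp
  calc (μ (B i))⁻¹ * ∫⁻ y in B i, h y ∂μ
      ≤ (μ (B i))⁻¹ * (∫⁻ y in B i, {y | t < h y}.indicator h y ∂μ + t * μ (B i)) := by gcongr
    _ = (μ (B i))⁻¹ * ∫⁻ y in B i, {y | t < h y}.indicator h y ∂μ
        + t * ((μ (B i))⁻¹ * μ (B i)) := by ring
    _ ≤ _ := by
      refine add_le_add (le_iSup₂ (f := fun i (_ : x ∈ B i) =>
        (μ (B i))⁻¹ * ∫⁻ y in B i, {y | t < h y}.indicator h y ∂μ) i hi) ?_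
      exact (mul_le_mul_right (ENNReal.inv_mul_le_one _) _).trans_eq (mul_one _)

theorem strong_type {α ι : Type*} [MeasurableSpace α] (μ : Measure α) (B : ι → Set α)
    (K : ℝ≥0∞) (p : ℝ) (hp : 1 < p)
    (hmeas : ∀ h : α → ℝ≥0∞, Measurable h → Measurable (avgMax μ B h))
    (hweak : ∀ h : α → ℝ≥0∞, Measurable h → ∀ t : ℝ≥0∞,
      t * μ {x | t < avgMax μ B h x} ≤ K * ∫⁻ y, h y ∂μ)
    (h : α → ℝ≥0∞) (hh : Measurable h) :
    ∫⁻ x, avgMax μ B h x ^ p ∂μ ≤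
      (K * 2 ^ (2*p) * (1 - (2:ℝ≥0∞)^(-(p-1)))⁻¹) * ∫⁻ x, h x ^ p ∂μ := by
  have hT := hmeas h hh
  have hstep : ∀ j : ℤ, (2:ℝ≥0∞)^(((j:ℝ)+2)*p) * μ {x | (2:ℝ≥0∞)^((j:ℝ)+1) < avgMax μ B h x} ≤
      K * 2 ^ (2*p) * ∫⁻ x, h x * (if (2:ℝ≥0∞)^(j:ℝ) < h x then (2:ℝ≥0∞)^((j:ℝ)*(p-1)) else 0) ∂μ := by
    intro j
    set t : ℝ≥0∞ := (2:ℝ≥0∞)^(j:ℝ) with ht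
    have ht0 : t ≠ 0 := (ENNReal.rpow_pos (by norm_num) (by norm_num)).ne'
    have htt : t ≠ ∞ := ENNReal.rpow_ne_top_of_ne_zero (by norm_num) (by norm_num)
    have h2t : (2:ℝ≥0∞)^((j:ℝ)+1) = t + t := by
      rw [ENNReal.rpow_add _ _ (by norm_num) (by norm_num), ENNReal.rpow_one, mul_two]
    have hms : MeasurableSet {y | t < h y} := measurableSet_lt measurable_const hh
    have hsub : {x | (2:ℝ≥0∞)^((j:ℝ)+1) < avgMax μ B h x} ⊆
        {x | t < avgMax μ B ({y | t < h y}.indicator h) x} := by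
      intro x hx
      simp only [mem_ofPred_eq, h2t] at hx ⊢
      exact lt_of_add_lt_add_right (hx.trans_le (avgMax_split μ B h t x))
    have hw := hweak _ (hh.indicator hms) t
    have e1 : (2:ℝ≥0∞)^(((j:ℝ)+2)*p) = 2^(2*p) * (2:ℝ≥0∞)^((j:ℝ)*(p-1)) * t := by
      rw [ht, ← ENNReal.rpow_add _ _ (by norm_num) (by norm_num),
        ← ENNReal.rpow_add _ _ (by norm_num) (by norm_num)]
      congr 1; ring
    have e2 : ∫⁻ x, h x * (if t < h x then (2:ℝ≥0∞)^((j:ℝ)*(p-1)) else 0) ∂μ =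
        (2:ℝ≥0∞)^((j:ℝ)*(p-1)) * ∫⁻ x, {y | t < h y}.indicator h x ∂μ := by
      rw [← lintegral_const_mul _ (hh.indicator hms)]
      congr 1; ext x
      by_cases hx : t < h x <;> simp [hx, mul_comm]
    rw [e1, e2]
    calc _ ≤ 2^(2*p) * (2:ℝ≥0∞)^((j:ℝ)*(p-1)) * t *
            μ {x | t < avgMax μ B ({y | t < h y}.indicator h) x} := by gcongr
      _ = 2^(2*p) * (2:ℝ≥0∞)^((j:ℝ)*(p-1)) *
            (t * μ {x | t < avgMax μ B ({y | t < h y}.indicator h) x}) := by ring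
      _ ≤ 2^(2*p) * (2:ℝ≥0∞)^((j:ℝ)*(p-1)) * (K * ∫⁻ y, {y | t < h y}.indicator h y ∂μ) := by gcongr
      _ = _ := by ring
  have hm1 : ∀ j : ℤ, MeasurableSet {x | (2:ℝ≥0∞)^((j:ℝ)+1) < avgMax μ B h x} :=
    fun j => measurableSet_lt measurable_const hT
  have hm2 : ∀ j : ℤ, MeasurableSet {x | (2:ℝ≥0∞)^(j:ℝ) < h x} :=
    fun j => measurableSet_lt measurable_const hh
  have hm3 : ∀ j : ℤ, Measurable fun x =>
      (if (2:ℝ≥0∞)^(j:ℝ) < h x then (2:ℝ≥0∞)^((j:ℝ)*(p-1)) else 0) :=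
    fun j => Measurable.ite (hm2 j) measurable_const measurable_const
  calc ∫⁻ x, avgMax μ B h x ^ p ∂μ
      ≤ ∫⁻ x, ∑' j : ℤ, (if (2:ℝ≥0∞)^((j:ℝ)+1) < avgMax μ B h x
          then (2:ℝ≥0∞)^(((j:ℝ)+2)*p) else 0) ∂μ :=
        lintegral_mono fun x => aux_lower p (by linarith) _
    _ = ∑' j : ℤ, (2:ℝ≥0∞)^(((j:ℝ)+2)*p) * μ {x | (2:ℝ≥0∞)^((j:ℝ)+1) < avgMax μ B h x} := by
        rw [lintegral_tsum fun j => (Measurable.ite (hm1 j) measurable_const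
          measurable_const).aemeasurable]
        congr 1; ext j
        rw [← lintegral_indicator_const (hm1 j)]
        congr 1; ext x
        simp only [indicator, mem_ofPred_eq]
    _ ≤ ∑' j : ℤ, K * 2 ^ (2*p) * ∫⁻ x, h x *
          (if (2:ℝ≥0∞)^(j:ℝ) < h x then (2:ℝ≥0∞)^((j:ℝ)*(p-1)) else 0) ∂μ :=
        ENNReal.tsum_le_tsum hstep
    _ = K * 2 ^ (2*p) * ∫⁻ x, h x * ∑' j : ℤ,
          (if (2:ℝ≥0∞)^(j:ℝ) < h x then (2:ℝ≥0∞)^((j:ℝ)*(p-1)) else 0) ∂μ := by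
        rw [ENNReal.tsum_mul_left, ← lintegral_tsum (f := fun (j : ℤ) x => h x *
          (if (2:ℝ≥0∞)^(j:ℝ) < h x then (2:ℝ≥0∞)^((j:ℝ)*(p-1)) else 0))
          fun j => (hh.mul (hm3 j)).aemeasurable]
        simp_rw [ENNReal.tsum_mul_left]
    _ ≤ K * 2 ^ (2*p) * ∫⁻ x, (1 - (2:ℝ≥0∞)^(-(p-1)))⁻¹ * h x ^ p ∂μ := by
        refine mul_le_mul_right (lintegral_mono fun x => ?_) _
        refine (mul_le_mul_right (aux_upper (p-1) (by linarith) (h x)) _).trans_eq ?_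
        have : h x ^ p = h x * h x ^ (p-1) := by
          have := ENNReal.rpow_add_of_nonneg (x := h x) 1 (p-1) (by norm_num) (by linarith)
          rw [ENNReal.rpow_one] at this
          rw [← this]; congr 1; ring
        rw [this]; ring
    _ = _ := by
        rw [lintegral_const_mul _ (hh.pow_const p)]; ring

theorem strong_const_ne_top (K : ℝ≥0∞) (hK : K ≠ ∞) (p : ℝ) (hp : 1 < p) :
    K * 2 ^ (2*p) * (1 - (2:ℝ≥0∞)^(-(p-1)))⁻¹ ≠ ∞ := by
  refine ENNReal.mul_ne_top (ENNReal.mul_ne_top hK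
    (ENNReal.rpow_ne_top_of_ne_zero (by norm_num) (by norm_num))) ?_
  rw [ENNReal.inv_ne_top]
  have : (2:ℝ≥0∞)^(-(p-1)) < 1 := by
    rw [ENNReal.rpow_neg, ENNReal.inv_lt_one]
    exact ENNReal.one_lt_rpow (by norm_num) (by linarith)
  exact (tsub_pos_of_lt this).ne'

/-! ### Lebesgue measure, open balls -/

theorem avgMax_ball_open {n : ℕ} (h : (Fin n → ℝ) → ℝ≥0∞) (t : ℝ≥0∞) :
    IsOpen {x | t < avgMax volume (fun i : (Fin n → ℝ) × ℝ => Metric.ball i.1 i.2) h x} := by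
  have : {x | t < avgMax volume (fun i : (Fin n → ℝ) × ℝ => Metric.ball i.1 i.2) h x} =
      ⋃ (i : (Fin n → ℝ) × ℝ) (_ : t < (volume (Metric.ball i.1 i.2))⁻¹ *
        ∫⁻ y in Metric.ball i.1 i.2, h y), Metric.ball i.1 i.2 := by
    ext x
    simp only [avgMax, mem_ofPred_eq, lt_iSup_iff, mem_iUnion, exists_prop, and_comm]
  rw [this]
  exact isOpen_iUnion fun i => isOpen_iUnion fun _ => Metric.isOpen_ball

theorem avgMax_ball_meas {n : ℕ} (h : (Fin n → ℝ) → ℝ≥0∞) :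
    Measurable (avgMax volume (fun i : (Fin n → ℝ) × ℝ => Metric.ball i.1 i.2) h) :=
  measurable_of_Ioi fun t => (avgMax_ball_open h t).measurableSet

theorem avgMax_ball_weak {n : ℕ} (h : (Fin n → ℝ) → ℝ≥0∞) (t : ℝ≥0∞) :
    t * volume {x | t < avgMax volume (fun i : (Fin n → ℝ) × ℝ => Metric.ball i.1 i.2) h x}
      ≤ 5 ^ n * ∫⁻ y, h y := by
  rw [(avgMax_ball_open h t).measure_eq_iSup_isCompact, ENNReal.mul_iSup]
  refine iSup_le fun K => ?_
  rw [ENNReal.mul_iSup]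
  refine iSup_le fun hK => ?_
  rw [ENNReal.mul_iSup]
  refine iSup_le fun hKc => ?_
  let I : Set ((Fin n → ℝ) × ℝ) := {i | 0 < i.2 ∧ t < (volume (Metric.ball i.1 i.2))⁻¹ *
        ∫⁻ y in Metric.ball i.1 i.2, h y}
  obtain ⟨T, hT, hTf, hTc⟩ := hKc.elim_finite_subcover_image (b := I)
    (c := fun i => Metric.ball i.1 i.2) (fun i _ => Metric.isOpen_ball) (by
      intro x hx
      have := hK hx
      simp only [avgMax, mem_ofPred_eq, lt_iSup_iff] at this
      obtain ⟨i, hi, hi2⟩ := this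
      simp only [mem_iUnion]
      exact ⟨i, ⟨Metric.pos_of_mem_ball hi, hi2⟩, hi⟩)
  obtain ⟨R, hR⟩ := (hTf.image Prod.snd).bddAbove
  obtain ⟨u, hu, hdis, hcov⟩ := Vitali.exists_disjoint_subfamily_covering_enlargement_closedBall T
    (fun i => i.1) (fun i => i.2) R (fun a ha => hR ⟨a, ha, rfl⟩) 5 (by norm_num)
  have huf : u.Finite := hTf.subset hu
  have hKsub : K ⊆ ⋃ i ∈ huf.toFinset, Metric.closedBall i.1 (5 * i.2) := by
    intro x hx
    have := hTc hx
    simp only [mem_iUnion] at this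
    obtain ⟨i, hi, hxi⟩ := this
    obtain ⟨b, hb, hsub⟩ := hcov i hi
    simp only [mem_iUnion]
    exact ⟨b, by simpa using hb, hsub (Metric.ball_subset_closedBall hxi)⟩
  have hpt : ∀ i ∈ huf.toFinset, t * volume (Metric.closedBall i.1 (5 * i.2)) ≤
      5 ^ n * ∫⁻ y in Metric.ball i.1 i.2, h y := by
    intro i hi
    obtain ⟨hpos, hlt⟩ := hT (hu (by simpa using hi))
    have hv : volume (Metric.closedBall i.1 (5 * i.2)) = 5 ^ n * volume (Metric.ball i.1 i.2) := by
      rw [Real.volume_pi_closedBall _ (by linarith), Real.volume_pi_ball _ hpos, Fintype.card_fin,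
        show (2 * (5 * i.2)) = 5 * (2 * i.2) by ring, mul_pow, ENNReal.ofReal_mul (by positivity),
        ENNReal.ofReal_pow (by norm_num)]
      norm_num
    have hv0 : volume (Metric.ball i.1 i.2) ≠ 0 := (Metric.measure_ball_pos _ _ hpos).ne'
    have hvt : volume (Metric.ball i.1 i.2) ≠ ∞ := measure_ball_lt_top.ne
    rw [hv]
    calc t * (5 ^ n * volume (Metric.ball i.1 i.2)) ≤ ((volume (Metric.ball i.1 i.2))⁻¹ *
        ∫⁻ y in Metric.ball i.1 i.2, h y) * (5 ^ n * volume (Metric.ball i.1 i.2)) := by gcongr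
      _ = ((volume (Metric.ball i.1 i.2))⁻¹ * volume (Metric.ball i.1 i.2)) *
          (5 ^ n * ∫⁻ y in Metric.ball i.1 i.2, h y) := by ring
      _ = _ := by rw [ENNReal.inv_mul_cancel hv0 hvt, one_mul]
  calc t * volume K ≤ t * ∑ i ∈ huf.toFinset, volume (Metric.closedBall i.1 (5 * i.2)) := by
        gcongr
        exact (measure_mono hKsub).trans (measure_biUnion_finset_le _ _)
    _ = ∑ i ∈ huf.toFinset, t * volume (Metric.closedBall i.1 (5 * i.2)) := Finset.mul_sum _ _ _
    _ ≤ ∑ i ∈ huf.toFinset, 5 ^ n * ∫⁻ y in Metric.ball i.1 i.2, h y := Finset.sum_le_sum hpt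
    _ = 5 ^ n * ∫⁻ y in ⋃ i ∈ huf.toFinset, Metric.ball i.1 i.2, h y := by
        rw [← Finset.mul_sum, lintegral_biUnion_finset _ (fun i _ => measurableSet_ball)]
        intro i hi j hj hij
        exact (hdis (by simpa using hi) (by simpa using hj) hij).mono
          Metric.ball_subset_closedBall Metric.ball_subset_closedBall
    _ ≤ _ := mul_le_mul_right (setLIntegral_le_lintegral _ _) _

/-! ### Laminar countable families -/

theorem avgMax_meas {α ι : Type*} [MeasurableSpace α] [Countable ι] (μ : Measure α)
    (B : ι → Set α) (hB : ∀ i, MeasurableSet (B i)) (h : α → ℝ≥0∞) :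
    Measurable (avgMax μ B h) := by
  refine Measurable.iSup fun i => ?_
  have : (fun x => ⨆ (_ : x ∈ B i), (μ (B i))⁻¹ * ∫⁻ y in B i, h y ∂μ) =
      (B i).indicator (fun _ => (μ (B i))⁻¹ * ∫⁻ y in B i, h y ∂μ) := by
    ext x
    by_cases hx : x ∈ B i <;> simp [hx]
  rw [this]
  exact measurable_const.indicator (hB i)

theorem laminar_finite {α ι : Type*} [DecidableEq ι] [MeasurableSpace α] (μ : Measure α)
    (B : ι → Set α) (hB : ∀ i, MeasurableSet (B i)) (s : ι → ℝ)
    (hlam : ∀ i j, s i ≤ s j → B i ⊆ B j ∨ Disjoint (B i) (B j)) (h : α → ℝ≥0∞) (t : ℝ≥0∞)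
    (F : Finset ι) : (∀ i ∈ F, t * μ (B i) ≤ ∫⁻ y in B i, h y ∂μ) →
    t * μ (⋃ i ∈ F, B i) ≤ ∫⁻ y in ⋃ i ∈ F, B i, h y ∂μ := by
  induction F using Finset.induction_on_min_value s with
  | empty => simp
  | insert a F ha hmin ih =>
    intro hF
    have ih' := ih fun i hi => hF i (Finset.mem_insert_of_mem hi)
    rw [Finset.set_biUnion_insert]
    by_cases hc : ∃ j ∈ F, B a ⊆ B j
    · obtain ⟨j, hj, hsub⟩ := hc
      have : B a ∪ ⋃ i ∈ F, B i = ⋃ i ∈ F, B i :=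
        union_eq_self_of_subset_left (hsub.trans (subset_biUnion_of_mem (u := B) hj))
      rwa [this]
    · have hd : Disjoint (B a) (⋃ i ∈ F, B i) := by
        simp only [disjoint_iUnion_right]
        intro i hi
        rcases hlam a i (hmin i hi) with h1 | h1
        · exact absurd ⟨i, hi, h1⟩ hc
        · exact h1
      have hmU : MeasurableSet (⋃ i ∈ F, B i) := F.measurableSet_biUnion fun i _ => hB i
      rw [measure_union hd hmU, lintegral_union hmU hd, mul_add]
      exact add_le_add (hF a (Finset.mem_insert_self _ _)) ih'

theorem laminar_weak {α ι : Type*} [MeasurableSpace α] [Countable ι] (μ : Measure α)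
    (B : ι → Set α) (hB : ∀ i, MeasurableSet (B i)) (s : ι → ℝ)
    (hlam : ∀ i j, s i ≤ s j → B i ⊆ B j ∨ Disjoint (B i) (B j)) (h : α → ℝ≥0∞) (t : ℝ≥0∞) :
    t * μ {x | t < avgMax μ B h x} ≤ 1 * ∫⁻ y, h y ∂μ := by
  classical
  let I : Set ι := {i | t < (μ (B i))⁻¹ * ∫⁻ y in B i, h y ∂μ}
  have heq : {x | t < avgMax μ B h x} = ⋃ i : I, B i := by
    ext x
    simp only [avgMax, mem_ofPred_eq, lt_iSup_iff, mem_iUnion, exists_prop, and_comm, I,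
      Subtype.exists]
  have hI : ∀ i ∈ I, t * μ (B i) ≤ ∫⁻ y in B i, h y ∂μ := by
    intro i hi
    have hi' : t < (μ (B i))⁻¹ * ∫⁻ y in B i, h y ∂μ := hi
    calc t * μ (B i) ≤ ((μ (B i))⁻¹ * ∫⁻ y in B i, h y ∂μ) * μ (B i) := by gcongr
      _ = ((μ (B i))⁻¹ * μ (B i)) * ∫⁻ y in B i, h y ∂μ := by ring
      _ ≤ 1 * ∫⁻ y in B i, h y ∂μ := by gcongr; exact ENNReal.inv_mul_le_one _
      _ = _ := one_mul _
  have hdir : Directed (· ⊆ ·) (fun F : Finset I => ⋃ i ∈ F, B i) :=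
    Monotone.directed_le fun F G hFG => biUnion_subset_biUnion_left hFG
  rw [heq, iUnion_eq_iUnion_finset, hdir.measure_iUnion, ENNReal.mul_iSup, one_mul]
  refine iSup_le fun F => ?_
  have := laminar_finite μ (fun i : I => B i) (fun i => hB i) (fun i => s i)
    (fun i j => hlam i j) h t F (fun i _ => hI i i.2)
  exact this.trans (setLIntegral_le_lintegral _ _)

/-! ### Geometry of the support -/

def rr (k m : ℕ) : ℝ := (1/2)^((k+3)*(m+2)+1)

def EE (n : ℕ) (e : ℕ × ℕ) : Set (Fin n → ℝ) :=
  Cube n (fun _ => 2^(e.1+3) + rr e.1 e.2) ((1/2)^((e.1+3)*(e.2+3)))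

def DD (n : ℕ) : (ℕ × ℕ) ⊕ ℕ → Set (Fin n → ℝ)
  | Sum.inl (k, N) => Cube n (fun _ => 2^(k+3)) ((1/2)^N)
  | Sum.inr N => Cube n (fun _ => 0) (2^N)

def dside : (ℕ × ℕ) ⊕ ℕ → ℝ
  | Sum.inl (_, N) => (1/2)^N
  | Sum.inr N => 2^N

theorem mem_Cube {n : ℕ} {a : Fin n → ℝ} {l : ℝ} {x : Fin n → ℝ} :
    x ∈ Cube n a l ↔ ∀ i, a i ≤ x i ∧ x i < a i + l := by
  simp [Cube, Set.mem_pi]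

theorem measurableSet_Cube {n : ℕ} (a : Fin n → ℝ) (l : ℝ) : MeasurableSet (Cube n a l) :=
  MeasurableSet.univ_pi fun _ => measurableSet_Ico

theorem volume_Cube {n : ℕ} (a : Fin n → ℝ) (l : ℝ) :
    volume (Cube n a l) = ENNReal.ofReal l ^ n := by
  rw [Cube, Real.volume_pi_Ico]; simp

theorem rr_pos (k m : ℕ) : 0 < rr k m := by unfold rr; positivity

theorem ss_le (k m : ℕ) : ((1:ℝ)/2)^((k+3)*(m+3)) ≤ rr k m / 4 := by
  have : (k+3)*(m+3) = ((k+3)*(m+2)+1) + 2 + k := by ring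
  rw [this, pow_add, pow_add, rr]
  have h1 : ((1:ℝ)/2)^k ≤ 1 := pow_le_one₀ (by norm_num) (by norm_num)
  have h2 : 0 < ((1:ℝ)/2)^((k+3)*(m+2)+1) := by positivity
  nlinarith

theorem rr_le (k m : ℕ) : rr k m ≤ 1/4 := by
  have h : ((1:ℝ)/2)^((k+3)*(m+2)+1) ≤ (1/2)^2 :=
    pow_le_pow_of_le_one (by norm_num) (by norm_num) (by nlinarith)
  unfold rr; linarith

theorem rr_lt {k m m' : ℕ} (h : m < m') : rr k m' ≤ rr k m / 8 := by
  have h1 : ((1:ℝ)/2)^((k+3)*(m'+2)+1) ≤ (1/2)^(((k+3)*(m+2)+1) + 3) :=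
    pow_le_pow_of_le_one (by norm_num) (by norm_num) (by nlinarith)
  rw [pow_add _ _ 3] at h1
  unfold rr; linarith

theorem EE_bound {n : ℕ} {e : ℕ × ℕ} {x : Fin n → ℝ} (hx : x ∈ EE n e) (i : Fin n) :
    2^(e.1+3) + rr e.1 e.2 ≤ x i ∧ x i < 2^(e.1+3) + 5/4 * rr e.1 e.2 := by
  have h := mem_Cube.1 hx i
  have := ss_le e.1 e.2
  exact ⟨h.1, by linarith [h.2]⟩

theorem two_pow_lt {k k' : ℕ} (h : k < k') : (2:ℝ)^(k+3) * 2 ≤ 2^(k'+3) := by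
  rw [← pow_succ]; exact pow_le_pow_right₀ (by norm_num) (by omega)

theorem eight_le (k : ℕ) : (8:ℝ) ≤ 2^(k+3) := by
  have : (2:ℝ)^3 ≤ 2^(k+3) := pow_le_pow_right₀ (by norm_num) (by omega)
  linarith

theorem EE_disj {n : ℕ} (hn : 1 ≤ n) {e e' : ℕ × ℕ} {x : Fin n → ℝ} (hx : x ∈ EE n e)
    (hx' : x ∈ EE n e') : e = e' := by
  have h1 := EE_bound hx ⟨0, hn⟩
  have h2 := EE_bound hx' ⟨0, hn⟩
  obtain ⟨k, m⟩ := e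
  obtain ⟨k', m'⟩ := e'
  simp only at h1 h2
  have p1 := rr_pos k m
  have p2 := rr_pos k' m'
  have q1 := rr_le k m
  have q2 := rr_le k' m'
  have hk : k = k' := by
    rcases lt_trichotomy k k' with h | h | h
    · have := two_pow_lt h; have := eight_le k; linarith
    · exact h
    · have := two_pow_lt h; have := eight_le k'; linarith
  subst hk
  rcases lt_trichotomy m m' with h | h | h
  · have := rr_lt (k := k) h; linarith
  · rw [h]
  · have := rr_lt (k := k) h; linarith

theorem DD_laminar {n : ℕ} (hn : 1 ≤ n) (i j : (ℕ × ℕ) ⊕ ℕ) (h : dside i ≤ dside j) :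
    DD n i ⊆ DD n j ∨ Disjoint (DD n i) (DD n j) := by
  have hlt : ∀ N : ℕ, ((1:ℝ)/2)^N ≤ 1 := fun N => pow_le_one₀ (by norm_num) (by norm_num)
  have hge : ∀ N : ℕ, (1:ℝ) ≤ 2^N := fun N => one_le_pow₀ (by norm_num)
  rcases i with ⟨k, N⟩ | N <;> rcases j with ⟨k', N'⟩ | N' <;> simp only [dside, DD] at h ⊢
  · by_cases hk : k = k'
    · subst hk
      left; intro x hx
      rw [mem_Cube] at hx ⊢
      exact fun i => ⟨(hx i).1, by linarith [(hx i).2]⟩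
    · right
      rw [Set.disjoint_left]
      intro x hx hx'
      have h1 := mem_Cube.1 hx ⟨0, hn⟩
      have h2 := mem_Cube.1 hx' ⟨0, hn⟩
      have := hlt N
      have := hlt N'
      rcases lt_or_gt_of_ne hk with h | h
      · have := two_pow_lt h; have := eight_le k; linarith
      · have := two_pow_lt h; have := eight_le k'; linarith
  · by_cases hk : k + 3 < N'
    · left; intro x hx
      rw [mem_Cube] at hx ⊢
      have h3 : (2:ℝ)^(k+3+1) ≤ 2^N' := pow_le_pow_right₀ (by norm_num) (by omega)
      rw [pow_succ] at h3
      have := eight_le k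
      have := hlt N
      exact fun i => ⟨by linarith [(hx i).1], by linarith [(hx i).2]⟩
    · right
      rw [Set.disjoint_left]
      intro x hx hx'
      have h1 := mem_Cube.1 hx ⟨0, hn⟩
      have h2 := mem_Cube.1 hx' ⟨0, hn⟩
      have h3 : (2:ℝ)^N' ≤ 2^(k+3) := pow_le_pow_right₀ (by norm_num) (by omega)
      linarith
  · right
    rw [Set.disjoint_left]
    intro x hx hx'
    have h1 := mem_Cube.1 hx ⟨0, hn⟩
    have h2 := mem_Cube.1 hx' ⟨0, hn⟩
    have := eight_le k'
    have := hlt N'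
    linarith
  · left; intro x hx
    rw [mem_Cube] at hx ⊢
    exact fun i => ⟨(hx i).1, by linarith [(hx i).2]⟩

theorem DD_eq (n : ℕ) (i : (ℕ × ℕ) ⊕ ℕ) : ∃ a, DD n i = Cube n a (dside i) := by
  rcases i with ⟨k, N⟩ | N
  · exact ⟨_, rfl⟩
  · exact ⟨_, rfl⟩

theorem dside_pos (i : (ℕ × ℕ) ⊕ ℕ) : 0 < dside i := by
  rcases i with ⟨k, N⟩ | N <;> simp only [dside] <;> positivity

theorem DD_meas (n : ℕ) (i : (ℕ × ℕ) ⊕ ℕ) : MeasurableSet (DD n i) := by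
  obtain ⟨a, ha⟩ := DD_eq n i
  rw [ha]; exact measurableSet_Cube _ _

theorem DD_cover {n : ℕ} (hn : 1 ≤ n) {e e' : ℕ × ℕ} {x y : Fin n → ℝ} {a : Fin n → ℝ} {l : ℝ}
    (hx : x ∈ EE n e) (hxQ : x ∈ Cube n a l) (hy : y ∈ EE n e') (hyQ : y ∈ Cube n a l)
    (hne : e ≠ e') :
    ∃ i, x ∈ DD n i ∧ dside i ≤ 8 * l ∧ ∀ z ∈ Cube n a l, ∀ e'', z ∈ EE n e'' → z ∈ DD n i := by
  have hl : ∀ z ∈ Cube n a l, ∀ w ∈ Cube n a l, ∀ i, z i < w i + l := fun z hz w hw i => by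
    have h1 := mem_Cube.1 hz i
    have h2 := mem_Cube.1 hw i
    linarith
  have hl0 : 0 < l := by
    have := mem_Cube.1 hxQ ⟨0, hn⟩; linarith
  by_cases hB : ∃ e₁ y₁, y₁ ∈ EE n e₁ ∧ y₁ ∈ Cube n a l ∧ e₁.1 ≠ e.1
  · obtain ⟨e₁, y₁, hy₁, hyQ₁, hne₁⟩ := hB
    have b1 := EE_bound hx
    have b2 := EE_bound hy₁ ⟨0, hn⟩
    have q1 := rr_le e.1 e.2
    have q2 := rr_le e₁.1 e₁.2
    have p1 := rr_pos e.1 e.2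
    have p2 := rr_pos e₁.1 e₁.2
    have hl1 := hl x hxQ y₁ hyQ₁ ⟨0, hn⟩
    have hl2 := hl y₁ hyQ₁ x hxQ ⟨0, hn⟩
    have b10 := b1 ⟨0, hn⟩
    have g1 := eight_le e.1
    have g2 := eight_le e₁.1
    have hx3 : (2:ℝ)^(e.1+3) + 1 ≤ 3 * l := by
      rcases lt_or_gt_of_ne hne₁ with h | h
      · have := two_pow_lt h; linarith
      · have := two_pow_lt h; linarith
    obtain ⟨N, hN1, hN2⟩ := exists_nat_pow_near (x := 4 * l) (y := (2:ℝ)) (by linarith)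
      (by norm_num)
    rw [pow_succ] at hN2
    have key : ∀ z ∈ Cube n a l, ∀ e'', z ∈ EE n e'' → z ∈ DD n (Sum.inr (N+1)) := by
      intro z hz e'' hze
      simp only [DD]
      rw [mem_Cube]
      intro i
      have h1 := EE_bound hze i
      have h2 := hl z hz x hxQ i
      have h3 := b1 i
      have h4 := rr_pos e''.1 e''.2
      have h5 := eight_le e''.1
      rw [pow_succ]
      exact ⟨by linarith, by linarith⟩
    refine ⟨Sum.inr (N+1), key x hxQ e hx, ?_, key⟩
    simp only [dside]; rw [pow_succ]; linarith
  · push Not at hB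
    have hk := hB e' y hy hyQ
    obtain ⟨k, m⟩ := e
    obtain ⟨k', m'⟩ := e'
    simp only at hk hB
    subst hk
    have b1 := EE_bound hx
    have b2 := EE_bound hy ⟨0, hn⟩
    simp only at b1 b2
    have hl1 := hl x hxQ y hyQ ⟨0, hn⟩
    have hl2 := hl y hyQ x hxQ ⟨0, hn⟩
    have b10 := b1 ⟨0, hn⟩
    have p1 := rr_pos k' m
    have p2 := rr_pos k' m'
    have hx3 : 5/4 * rr k' m ≤ 2 * l := by
      have hm : m ≠ m' := by rintro rfl; exact hne rfl
      rcases lt_or_gt_of_ne hm with h | h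
      · have := rr_lt (k := k') h; linarith
      · have := rr_lt (k := k') h; linarith
    have key0 : ∀ z ∈ Cube n a l, ∀ e'', z ∈ EE n e'' → ∀ i, 2^(k'+3) ≤ z i ∧
        z i < 2^(k'+3) + 3*l ∧ z i < 2^(k'+3) + 1 := by
      intro z hz e'' hze i
      have hkk := hB e'' z hze hz
      have h1 := EE_bound hze i
      have h2 := hl z hz x hxQ i
      have h3 := b1 i
      rw [hkk] at h1
      have h4 := rr_pos k' e''.2
      have h5 := rr_le k' e''.2
      exact ⟨by linarith, by linarith, by linarith⟩
    have hN : ∃ N : ℕ, ((1:ℝ)/2)^N ≤ 8 * l ∧ (3*l ≤ (1/2)^N ∨ 1 ≤ ((1:ℝ)/2)^N) := by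
      by_cases h1 : 1 ≤ 3*l
      · exact ⟨0, by rw [pow_zero]; linarith, Or.inr (by rw [pow_zero])⟩
      · obtain ⟨N, hN1, hN2⟩ := exists_nat_pow_near_of_lt_one (x := 3*l) (y := (1:ℝ)/2)
          (by linarith) (by linarith) (by norm_num) (by norm_num)
        rw [pow_succ] at hN1
        exact ⟨N, by linarith, Or.inl hN2⟩
    obtain ⟨N, hN1, hN2⟩ := hN
    have key : ∀ z ∈ Cube n a l, ∀ e'', z ∈ EE n e'' → z ∈ DD n (Sum.inl (k', N)) := by
      intro z hz e'' hze
      simp only [DD]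
      rw [mem_Cube]
      intro i
      obtain ⟨h1, h2, h3⟩ := key0 z hz e'' hze i
      refine ⟨h1, ?_⟩
      rcases hN2 with h | h <;> linarith
    exact ⟨Sum.inl (k', N), key x hxQ _ hx, hN1, key⟩

theorem MaxFn_le {n : ℕ} (hn : 1 ≤ n) (f : (Fin n → ℝ) → ℝ≥0∞)
    (hf : ∀ x, f x ≠ 0 → ∃ e, x ∈ EE n e) {e : ℕ × ℕ} {x : Fin n → ℝ} (hx : x ∈ EE n e) :
    MaxFn f x ≤ max (2^n * avgMax volume (fun i : (Fin n → ℝ) × ℝ => Metric.ball i.1 i.2)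
      ((EE n e).indicator f) x) (8^n * avgMax volume (DD n) f x) := by
  refine iSup_le fun a => iSup_le fun l => iSup₂_le fun hl hxQ => ?_
  have hmQ := measurableSet_Cube a l
  by_cases hc : ∃ e' y, y ∈ EE n e' ∧ y ∈ Cube n a l ∧ e ≠ e'
  · obtain ⟨e', y, hy, hyQ, hne⟩ := hc
    obtain ⟨i, hxi, hi, hcov⟩ := DD_cover hn hx hxQ hy hyQ hne
    refine le_trans ?_ (le_max_right _ _)
    have h1 : (∫⁻ y in Cube n a l, f y) ≤ ∫⁻ y in DD n i, f y := by
      rw [← lintegral_indicator hmQ, ← lintegral_indicator (DD_meas n i)]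
      refine lintegral_mono fun y => ?_
      by_cases hyQ : y ∈ Cube n a l
      · by_cases hfy : f y = 0
        · simp [indicator, hfy]
        · obtain ⟨e'', he''⟩ := hf y hfy
          simp [hyQ, hcov y hyQ e'' he'']
      · simp [hyQ]
    have h2 : (volume (Cube n a l))⁻¹ ≤ 8^n * (volume (DD n i))⁻¹ := by
      obtain ⟨b, hb⟩ := DD_eq n i
      rw [hb, volume_Cube, volume_Cube]
      have : ENNReal.ofReal (dside i) ≤ 8 * ENNReal.ofReal l := by
        refine (ENNReal.ofReal_le_ofReal hi).trans ?_
        rw [ENNReal.ofReal_mul (by norm_num)]; norm_num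
      have h3 : ENNReal.ofReal (dside i) ^ n ≤ 8^n * ENNReal.ofReal l ^ n := by
        rw [← mul_pow]; gcongr
      have hd0 : ENNReal.ofReal (dside i) ^ n ≠ 0 :=
        pow_ne_zero _ (ENNReal.ofReal_pos.2 (dside_pos i)).ne'
      have hdt : ENNReal.ofReal (dside i) ^ n ≠ ∞ := ENNReal.pow_ne_top ENNReal.ofReal_ne_top
      have hl0 : ENNReal.ofReal l ^ n ≠ 0 := pow_ne_zero _ (ENNReal.ofReal_pos.2 hl).ne'
      have hlt : ENNReal.ofReal l ^ n ≠ ∞ := ENNReal.pow_ne_top ENNReal.ofReal_ne_top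
      rw [← div_eq_mul_inv, ENNReal.le_div_iff_mul_le (Or.inl hd0) (Or.inl hdt), mul_comm,
        ← div_eq_mul_inv]
      exact ENNReal.div_le_of_le_mul h3
    calc _ ≤ (8^n * (volume (DD n i))⁻¹) * ∫⁻ y in DD n i, f y := mul_le_mul' h2 h1
      _ = 8^n * ((volume (DD n i))⁻¹ * ∫⁻ y in DD n i, f y) := by ring
      _ ≤ _ := mul_le_mul_right (le_iSup₂ (f := fun i (_ : x ∈ DD n i) =>
        (volume (DD n i))⁻¹ * ∫⁻ y in DD n i, f y) i hxi) _
  · push Not at hc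
    refine le_trans ?_ (le_max_left _ _)
    let c : Fin n → ℝ := fun i => a i + l/2
    have hsub : Cube n a l ⊆ Metric.ball c l := by
      intro z hz
      rw [mem_Cube] at hz
      rw [Metric.mem_ball, dist_pi_lt_iff hl]
      intro i
      rw [Real.dist_eq, abs_lt]
      have := hz i
      simp only [c]
      constructor <;> linarith
    have h1 : (∫⁻ y in Cube n a l, f y) ≤ ∫⁻ y in Metric.ball c l, (EE n e).indicator f y := by
      rw [← lintegral_indicator hmQ, ← lintegral_indicator measurableSet_ball]
      refine lintegral_mono fun y => ?_
      by_cases hyQ : y ∈ Cube n a l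
      · by_cases hfy : f y = 0
        · simp [indicator, hfy]
        · obtain ⟨e'', he''⟩ := hf y hfy
          have := hc e'' y he'' hyQ
          subst this
          simp only [indicator, hyQ, hsub hyQ, he'', if_true, le_refl]
      · simp [hyQ]
    have h2 : (volume (Cube n a l))⁻¹ = 2^n * (volume (Metric.ball c l))⁻¹ := by
      have h2n0 : (2:ℝ≥0∞)^n ≠ 0 := pow_ne_zero _ (by norm_num)
      have h2nt : (2:ℝ≥0∞)^n ≠ ∞ := ENNReal.pow_ne_top (by norm_num)
      rw [volume_Cube, Real.volume_pi_ball _ hl, Fintype.card_fin, mul_pow,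
        ENNReal.ofReal_mul (by positivity), ENNReal.ofReal_pow (by norm_num),
        ENNReal.ofReal_pow hl.le, ENNReal.ofReal_ofNat,
        ENNReal.mul_inv (Or.inl h2n0) (Or.inl h2nt), ← mul_assoc,
        ENNReal.mul_inv_cancel h2n0 h2nt, one_mul]
    calc _ ≤ (2^n * (volume (Metric.ball c l))⁻¹) *
          ∫⁻ y in Metric.ball c l, (EE n e).indicator f y := mul_le_mul' h2.le h1
      _ = 2^n * ((volume (Metric.ball c l))⁻¹ *
          ∫⁻ y in Metric.ball c l, (EE n e).indicator f y) := by ring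
      _ ≤ _ := mul_le_mul_right (le_iSup₂ (f := fun (i : (Fin n → ℝ) × ℝ)
        (_ : x ∈ Metric.ball i.1 i.2) => (volume (Metric.ball i.1 i.2))⁻¹ *
        ∫⁻ y in Metric.ball i.1 i.2, (EE n e).indicator f y) (c, l) (hsub hxQ)) _

/-! ### The weight -/

def aa (n : ℕ) (e : ℕ × ℕ) : ℝ≥0∞ :=
  Ak n (e.1+3) * ((2:ℝ≥0∞)^((e.1+3)*n) / ((2:ℝ≥0∞)^((e.1+3-1)*n) + 1))^(e.2+3)

theorem aa_ne_top (n : ℕ) (e : ℕ × ℕ) : aa n e ≠ ∞ := by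
  unfold aa Ak
  have h : ∀ j : ℕ, (2:ℝ≥0∞)^j ≠ ∞ := fun j => ENNReal.pow_ne_top (by norm_num)
  refine ENNReal.mul_ne_top (ENNReal.mul_ne_top (h _) (ENNReal.pow_ne_top ?_))
    (ENNReal.pow_ne_top (ENNReal.div_ne_top (h _) ?_))
  · exact ENNReal.add_ne_top.2 ⟨h _, by norm_num⟩
  · simp

theorem mem_Q1_iff {n k m : ℕ} {x : Fin n → ℝ} :
    (fun i => x i - (2:ℝ)^(k+3)) ∈ Q1 n (k+3) (m+3) ↔ x ∈ EE n (k, m) := by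
  have h1 : (2:ℝ)^(-(((k+3:ℕ):ℤ)*(((m+3:ℕ):ℤ)-1)) - 1) = rr k m := by
    have : (-(((k+3:ℕ):ℤ)*(((m+3:ℕ):ℤ)-1)) - 1) = -(((k+3)*(m+2)+1 : ℕ) : ℤ) := by
      push_cast; ring
    rw [this, zpow_neg, zpow_natCast, rr, one_div, inv_pow]
  have h2 : (2:ℝ)^(-(((k+3:ℕ):ℤ)*((m+3:ℕ):ℤ))) = (1/2)^((k+3)*(m+3)) := by
    have : (-(((k+3:ℕ):ℤ)*((m+3:ℕ):ℤ))) = -(((k+3)*(m+3) : ℕ) : ℤ) := by push_cast; ring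
    rw [this, zpow_neg, zpow_natCast, one_div, inv_pow]
  unfold Q1 EE
  rw [h1, h2, mem_Cube, mem_Cube]
  refine forall_congr' fun i => ?_
  constructor
  · rintro ⟨h3, h4⟩; exact ⟨by linarith, by linarith⟩
  · rintro ⟨h3, h4⟩; exact ⟨by linarith, by linarith⟩

theorem wk_eq {n : ℕ} (hn : 1 ≤ n) {k m : ℕ} {x : Fin n → ℝ} (hx : x ∈ EE n (k, m)) :
    wk n (k+3) (fun i => x i - (2:ℝ)^(k+3)) =
      ((2:ℝ≥0∞)^((k+3)*n) / ((2:ℝ≥0∞)^((k+3-1)*n) + 1))^(m+3) := by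
  have hb : ∀ i, rr k m ≤ x i - 2^(k+3) ∧ x i - 2^(k+3) < rr k m + (1/2)^((k+3)*(m+3)) := by
    intro i
    have := mem_Cube.1 hx i
    simp only at this
    exact ⟨by linarith, by linarith⟩
  have hr := rr_pos k m
  have hs := ss_le k m
  have hr4 := rr_le k m
  have d0 : ∀ i j, j < m + 3 → digit (k+3) j (x i - 2^(k+3)) = 0 := by
    intro i j hj
    obtain ⟨h1, h2⟩ := hb i
    unfold digit
    have : ⌊(x i - 2^(k+3)) * 2^((k+3)*j)⌋ = 0 := by
      rw [Int.floor_eq_zero_iff]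
      refine ⟨mul_nonneg (by linarith) (by positivity), ?_⟩
      have h3 : (2:ℝ)^((k+3)*j) ≤ 2^((k+3)*(m+2)) :=
        pow_le_pow_right₀ (by norm_num) (Nat.mul_le_mul_left _ (by omega))
      have h4 : rr k m * 2 * 2^((k+3)*(m+2)) = 1 := by
        rw [rr, pow_succ, one_div, inv_pow]
        field_simp
      have h5 : (0:ℝ) < 2^((k+3)*j) := by positivity
      calc (x i - 2^(k+3)) * 2^((k+3)*j) < (rr k m * 2) * 2^((k+3)*j) := by
            apply mul_lt_mul_of_pos_right _ h5; linarith
        _ ≤ (rr k m * 2) * 2^((k+3)*(m+2)) := by gcongr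
        _ = 1 := h4
    rw [this]; simp
  have dm : ∀ i, digit (k+3) (m+3) (x i - 2^(k+3)) = 2^(k+2) := by
    intro i
    obtain ⟨h1, h2⟩ := hb i
    unfold digit
    have h3 : rr k m * 2^((k+3)*(m+3)) = 2^(k+2) := by
      have : (k+3)*(m+3) = ((k+3)*(m+2)+1) + (k+2) := by ring
      rw [rr, this, pow_add (2:ℝ) ((k+3)*(m+2)+1) (k+2), ← mul_assoc, ← mul_pow]; norm_num
    have h4 : ((1:ℝ)/2)^((k+3)*(m+3)) * 2^((k+3)*(m+3)) = 1 := by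
      rw [← mul_pow]; norm_num
    have h5 : (0:ℝ) < 2^((k+3)*(m+3)) := by positivity
    have : ⌊(x i - 2^(k+3)) * 2^((k+3)*(m+3))⌋ = 2^(k+2) := by
      rw [Int.floor_eq_iff]
      push_cast
      constructor
      · rw [← h3]; exact mul_le_mul_of_nonneg_right h1 h5.le
      · rw [← h3, ← h4, ← add_mul]; exact mul_lt_mul_of_pos_right h2 h5
    rw [this]
    exact Int.emod_eq_of_lt (by positivity) (pow_lt_pow_right₀ (by norm_num) (by omega))
  unfold wk
  rw [tsum_eq_single (m+2)]
  · rw [indicator_of_mem]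
    refine ⟨fun i => ⟨by linarith [(hb i).1], by linarith [(hb i).2]⟩, fun i => ⟨?_, ?_⟩⟩
    · intro j _ hj
      rw [d0 i j hj]; positivity
    · exact dm i
  · intro m' hm'
    rw [indicator_of_notMem]
    rintro ⟨_, h⟩
    obtain ⟨h1, h2⟩ := h ⟨0, hn⟩
    rcases lt_or_gt_of_ne hm' with hlt | hgt
    · rw [d0 _ (m'+1) (by omega)] at h2
      have : (0:ℤ) < 2^(k+3-1) := by positivity
      omega
    · have := h1 (m+3) (by omega) (by omega)
      rw [dm] at this
      simp at this

theorem bigW_eq {n : ℕ} (hn : 1 ≤ n) {e : ℕ × ℕ} {x : Fin n → ℝ} (hx : x ∈ EE n e) :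
    bigW n x = aa n e := by
  obtain ⟨k, m⟩ := e
  unfold bigW
  rw [tsum_eq_single k]
  · rw [indicator_of_mem, wk_eq hn hx, aa]
    exact mem_iUnion.2 ⟨m, mem_Q1_iff.2 hx⟩
  · intro k' hk'
    rw [indicator_of_notMem]
    intro h
    obtain ⟨m', hm'⟩ := mem_iUnion.1 h
    have := EE_disj hn hx (mem_Q1_iff.1 hm')
    exact hk' (Prod.ext_iff.1 this).1.symm

theorem bigW_supp {n : ℕ} {x : Fin n → ℝ} (hx : bigW n x ≠ 0) : ∃ e, x ∈ EE n e := by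
  unfold bigW at hx
  rw [ne_eq, ENNReal.tsum_eq_zero] at hx
  push Not at hx
  obtain ⟨k, hk⟩ := hx
  have := mem_of_indicator_ne_zero hk
  obtain ⟨m, hm⟩ := mem_iUnion.1 this
  exact ⟨(k, m), mem_Q1_iff.1 hm⟩

theorem bigW_tsum {n : ℕ} (hn : 1 ≤ n) (x : Fin n → ℝ) :
    bigW n x = ∑' e, (EE n e).indicator (fun _ => aa n e) x := by
  by_cases h : ∃ e, x ∈ EE n e
  · obtain ⟨e, he⟩ := h
    rw [tsum_eq_single e, indicator_of_mem he, bigW_eq hn he]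
    intro e' he'
    rw [indicator_of_notMem]
    exact fun h' => he' (EE_disj hn h' he)
  · have h0 : bigW n x = 0 := by
      by_contra h0; exact h (bigW_supp h0)
    push Not at h
    rw [h0]; symm
    rw [ENNReal.tsum_eq_zero]
    exact fun e => indicator_of_notMem (h e) _

theorem bigW_meas {n : ℕ} (hn : 1 ≤ n) : Measurable (bigW n) := by
  have : bigW n = fun x => ∑' e, (EE n e).indicator (fun _ => aa n e) x := funext (bigW_tsum hn)
  rw [this]
  exact Measurable.tsum fun e => measurable_const.indicator (measurableSet_Cube _ _)

theorem bigW_ne_top {n : ℕ} (hn : 1 ≤ n) (x : Fin n → ℝ) : bigW n x ≠ ∞ := by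
  by_cases h : bigW n x = 0
  · simp [h]
  · obtain ⟨e, he⟩ := bigW_supp h
    rw [bigW_eq hn he]; exact aa_ne_top n e

theorem le_MaxFn {n : ℕ} (hn : 1 ≤ n) (x : Fin n → ℝ) : bigW n x ≤ MaxFn (bigW n) x := by
  by_cases h : bigW n x = 0
  · simp [h]
  obtain ⟨e, he⟩ := bigW_supp h
  have hm : MeasurableSet (EE n e) := measurableSet_Cube _ _
  have hl : (0:ℝ) < (1/2)^((e.1+3)*(e.2+3)) := by positivity
  have hv : volume (EE n e) = ENNReal.ofReal ((1/2)^((e.1+3)*(e.2+3))) ^ n := volume_Cube _ _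
  have hv0 : volume (EE n e) ≠ 0 := by
    rw [hv]; exact pow_ne_zero _ (ENNReal.ofReal_pos.2 hl).ne'
  have hvt : volume (EE n e) ≠ ∞ := by
    rw [hv]; exact ENNReal.pow_ne_top ENNReal.ofReal_ne_top
  have h1 : bigW n x = (volume (EE n e))⁻¹ * ∫⁻ y in EE n e, bigW n y := by
    rw [setLIntegral_congr_fun hm (fun y hy => bigW_eq hn hy), setLIntegral_const, bigW_eq hn he,
      mul_comm, mul_assoc, ENNReal.mul_inv_cancel hv0 hvt, mul_one]
  rw [h1]
  unfold MaxFn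
  exact le_iSup_of_le _ (le_iSup_of_le _ (le_iSup₂_of_le hl he le_rfl))

theorem avgMax_le_MaxFn {n : ℕ} (f : (Fin n → ℝ) → ℝ≥0∞) (x : Fin n → ℝ) :
    avgMax volume (DD n) f x ≤ MaxFn f x := by
  refine iSup₂_le fun i hi => ?_
  obtain ⟨a, ha⟩ := DD_eq n i
  rw [ha] at hi ⊢
  unfold MaxFn
  exact le_iSup_of_le _ (le_iSup_of_le _ (le_iSup₂_of_le (dside_pos i) hi le_rfl))

theorem avgMax_compare {n : ℕ} (hn : 1 ≤ n) (p : ℝ) (hp : 1 < p) (f h : (Fin n → ℝ) → ℝ≥0∞)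
    (hf : Measurable f) (hfs : ∀ x, bigW n x = 0 → f x = 0)
    (hh : h = fun x => f x * (avgMax volume (DD n) (bigW n) x / bigW n x)) (hhm : Measurable h)
    (hfin : ∫⁻ x, h x ^ p ∂(volume.withDensity (bigW n)) ≠ ∞) (x : Fin n → ℝ) :
    avgMax volume (DD n) f x ≤ avgMax (volume.withDensity (bigW n)) (DD n) h x := by
  have hw := bigW_meas hn
  refine iSup₂_mono fun i _ => ?_
  have hm := DD_meas n i
  obtain ⟨b, hb⟩ := DD_eq n i
  have hv0 : volume (DD n i) ≠ 0 := by
    rw [hb, volume_Cube]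
    exact pow_ne_zero _ (ENNReal.ofReal_pos.2 (dside_pos i)).ne'
  have hvt : volume (DD n i) ≠ ∞ := by
    rw [hb, volume_Cube]; exact ENNReal.pow_ne_top ENNReal.ofReal_ne_top
  have hN : ∀ y ∈ DD n i, (volume (DD n i))⁻¹ * ∫⁻ y in DD n i, bigW n y ≤
      avgMax volume (DD n) (bigW n) y := fun y hy =>
    le_iSup₂ (f := fun i (_ : y ∈ DD n i) => (volume (DD n i))⁻¹ * ∫⁻ y in DD n i, bigW n y) i hy
  have hμ : (volume.withDensity (bigW n)) (DD n i) = ∫⁻ y in DD n i, bigW n y :=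
    withDensity_apply _ hm
  rw [hμ, setLIntegral_withDensity_eq_setLIntegral_mul _ hw hhm hm]
  set W := ∫⁻ y in DD n i, bigW n y with hW
  by_cases hW0 : W = 0
  · have h1 : ∀ᵐ y ∂(volume.restrict (DD n i)), bigW n y = 0 :=
      (lintegral_eq_zero_iff hw).1 hW0
    have h2 : ∫⁻ y in DD n i, f y = 0 := by
      rw [lintegral_eq_zero_iff hf]
      filter_upwards [h1] with y hy using hfs y hy
    rw [h2]; simp
  by_cases hWt : W = ∞
  · have h1 := ae_lt_top (hhm.pow_const p) hfin
    rw [ae_withDensity_iff hw] at h1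
    have h2 : ∫⁻ y in DD n i, f y = 0 := by
      rw [lintegral_eq_zero_iff hf]
      filter_upwards [ae_restrict_of_ae h1, ae_restrict_mem hm] with y hy hyD
      by_contra hfy
      have hfy' : f y ≠ 0 := hfy
      have hwy : bigW n y ≠ 0 := fun h0 => hfy (hfs y h0)
      have hNy := hN y hyD
      rw [hWt, ENNReal.mul_top (ENNReal.inv_ne_zero.2 hvt), top_le_iff] at hNy
      have : h y = ∞ := by
        rw [hh]; simp only
        rw [hNy, ENNReal.top_div_of_ne_top (bigW_ne_top hn y), ENNReal.mul_top hfy']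
      have h3 := hy hwy
      rw [this, ENNReal.top_rpow_of_pos (by linarith)] at h3
      exact lt_irrefl _ h3
    rw [h2]; simp
  have key : ((volume (DD n i))⁻¹ * W) * ∫⁻ y in DD n i, f y ≤
      ∫⁻ y in DD n i, (bigW n * h) y := by
    rw [← lintegral_const_mul _ hf]
    refine setLIntegral_mono' hm fun y hy => ?_
    by_cases hfy : f y = 0
    · simp [hfy]
    · have hwy : bigW n y ≠ 0 := fun h0 => hfy (hfs y h0)
      have : (bigW n * h) y = avgMax volume (DD n) (bigW n) y * f y := by
        simp only [Pi.mul_apply, hh]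
        rw [mul_left_comm, ENNReal.mul_div_cancel hwy (bigW_ne_top hn y), mul_comm]
      rw [this]
      exact mul_le_mul_left (hN y hy) _
  calc (volume (DD n i))⁻¹ * ∫⁻ y in DD n i, f y
      = (W⁻¹ * W) * ((volume (DD n i))⁻¹ * ∫⁻ y in DD n i, f y) := by
        rw [ENNReal.inv_mul_cancel hW0 hWt, one_mul]
    _ = W⁻¹ * (((volume (DD n i))⁻¹ * W) * ∫⁻ y in DD n i, f y) := by ring
    _ ≤ _ := mul_le_mul_right key _

/-- For `n ≥ 1`, `p ∈ (1,∞)` and the weight `v = (Mw/w)^p w` on `supp w`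
(`v = 0` off `supp w`), there is a constant `C = C(n,p)` such that
`‖Mf‖_{L^p(w)} ≤ C ‖f‖_{L^p(v)}` for every measurable `f` supported in `supp w`. -/
theorem maximal_bounded_Lpv_to_Lpw (n : ℕ) (hn : 1 ≤ n) (p : ℝ) (hp : 1 < p) :
    ∃ C : ℝ≥0∞, C ≠ ∞ ∧
      ∀ f : (Fin n → ℝ) → ℝ≥0∞, Measurable f →
        (∀ x, bigW n x = 0 → f x = 0) →
        ∫⁻ x, MaxFn f x ^ p * bigW n x
          ≤ C ^ p * ∫⁻ x, f x ^ p *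
              (if bigW n x = 0 then 0
               else (MaxFn (bigW n) x / bigW n x) ^ p * bigW n x) := by
  have hp0 : 0 < p := by linarith
  have hw := bigW_meas hn
  obtain ⟨C1, hC1t, hC1⟩ : ∃ C1 : ℝ≥0∞, C1 ≠ ∞ ∧ ∀ g : (Fin n → ℝ) → ℝ≥0∞, Measurable g →
      ∫⁻ x, avgMax volume (fun i : (Fin n → ℝ) × ℝ => Metric.ball i.1 i.2) g x ^ p ≤
        C1 * ∫⁻ x, g x ^ p :=
    ⟨_, strong_const_ne_top (5^n) (ENNReal.pow_ne_top (by norm_num)) p hp,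
      fun g hg => strong_type volume _ (5^n) p hp (fun h _ => avgMax_ball_meas h)
        (fun h _ t => avgMax_ball_weak h t) g hg⟩
  obtain ⟨C2, hC2t, hC2⟩ : ∃ C2 : ℝ≥0∞, C2 ≠ ∞ ∧ ∀ g : (Fin n → ℝ) → ℝ≥0∞, Measurable g →
      ∫⁻ x, avgMax (volume.withDensity (bigW n)) (DD n) g x ^ p ∂(volume.withDensity (bigW n)) ≤
        C2 * ∫⁻ x, g x ^ p ∂(volume.withDensity (bigW n)) :=
    ⟨_, strong_const_ne_top 1 (by norm_num) p hp,
      fun g hg => strong_type _ _ 1 p hp (fun h _ => avgMax_meas _ _ (DD_meas n) h)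
        (fun h _ t => laminar_weak _ _ (DD_meas n) dside (DD_laminar hn) h t) g hg⟩
  set Ct : ℝ≥0∞ := ((2:ℝ≥0∞)^n)^p * C1 + ((8:ℝ≥0∞)^n)^p * C2 + 1 with hCt
  have hCtt : Ct ≠ ∞ := by
    have h2 : ((2:ℝ≥0∞)^n)^p ≠ ∞ :=
      ENNReal.rpow_ne_top_of_nonneg hp0.le (ENNReal.pow_ne_top (by norm_num))
    have h8 : ((8:ℝ≥0∞)^n)^p ≠ ∞ :=
      ENNReal.rpow_ne_top_of_nonneg hp0.le (ENNReal.pow_ne_top (by norm_num))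
    exact ENNReal.add_ne_top.2 ⟨ENNReal.add_ne_top.2
      ⟨ENNReal.mul_ne_top h2 hC1t, ENNReal.mul_ne_top h8 hC2t⟩, by norm_num⟩
  refine ⟨Ct ^ (1/p), ENNReal.rpow_ne_top_of_nonneg (by positivity) hCtt, fun f hf hfs => ?_⟩
  rw [← ENNReal.rpow_mul, one_div, inv_mul_cancel₀ hp0.ne', ENNReal.rpow_one]
  set V : (Fin n → ℝ) → ℝ≥0∞ := fun x => f x ^ p * (if bigW n x = 0 then 0
    else (MaxFn (bigW n) x / bigW n x) ^ p * bigW n x) with hV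
  change _ ≤ Ct * ∫⁻ x, V x
  by_cases hVt : ∫⁻ x, V x = ∞
  · rw [hVt, ENNReal.mul_top (by simp [hCt])]; exact le_top
  set h : (Fin n → ℝ) → ℝ≥0∞ :=
    fun x => f x * (avgMax volume (DD n) (bigW n) x / bigW n x) with hh
  have hNm : Measurable (avgMax volume (DD n) (bigW n)) := avgMax_meas _ _ (DD_meas n) _
  have hhm : Measurable h := hf.mul (hNm.div hw)
  have hA : ∫⁻ x, h x ^ p ∂(volume.withDensity (bigW n)) ≤ ∫⁻ x, V x := by
    rw [lintegral_withDensity_eq_lintegral_mul _ hw (hhm.pow_const p)]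
    refine lintegral_mono fun x => ?_
    simp only [Pi.mul_apply, hV, hh]
    by_cases hx : bigW n x = 0
    · simp [hx]
    · rw [if_neg hx, ENNReal.mul_rpow_of_nonneg _ _ hp0.le, mul_comm, mul_assoc]
      gcongr
      exact avgMax_le_MaxFn _ _
  have hB := avgMax_compare hn p hp f h hf hfs hh hhm (ne_top_of_le_ne_top hVt hA)
  have hfw : ∀ x, f x ^ p * bigW n x ≤ V x := by
    intro x
    simp only [hV]
    by_cases hx : bigW n x = 0
    · simp [hx]
    · rw [if_neg hx]
      gcongr
      have h1 : 1 ≤ MaxFn (bigW n) x / bigW n x := by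
        rw [ENNReal.le_div_iff_mul_le (Or.inl hx) (Or.inl (bigW_ne_top hn x)), one_mul]
        exact le_MaxFn hn x
      calc bigW n x = 1 ^ p * bigW n x := by simp
        _ ≤ _ := by gcongr
  have hfE : ∀ x, f x ≠ 0 → ∃ e, x ∈ EE n e := fun x hx =>
    bigW_supp fun h0 => hx (hfs x h0)
  have hEm : ∀ e, MeasurableSet (EE n e) := fun e => measurableSet_Cube _ _
  let loc : ℕ × ℕ → (Fin n → ℝ) → ℝ≥0∞ := fun e =>
    avgMax volume (fun i : (Fin n → ℝ) × ℝ => Metric.ball i.1 i.2) ((EE n e).indicator f)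
  have hlocm : ∀ e, Measurable (loc e) := fun e => avgMax_ball_meas _
  let S : (Fin n → ℝ) → ℝ≥0∞ := avgMax (volume.withDensity (bigW n)) (DD n) h
  have hSm : Measurable S := avgMax_meas _ _ (DD_meas n) _
  have hpt : ∀ x, MaxFn f x ^ p * bigW n x ≤
      (∑' e, ((2:ℝ≥0∞)^n)^p * aa n e * (loc e x ^ p)
        * (EE n e).indicator (fun _ => 1) x) + ((8:ℝ≥0∞)^n)^p * (bigW n x * S x ^ p) := by
    intro x
    by_cases hx : bigW n x = 0
    · simp [hx]
    obtain ⟨e, he⟩ := bigW_supp hx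
    have h1 := MaxFn_le hn f hfE he
    rcases le_max_iff.1 h1 with h2 | h2
    · refine le_trans ?_ le_self_add
      refine le_trans ?_ (ENNReal.le_tsum e)
      rw [indicator_of_mem he, mul_one, bigW_eq hn he]
      calc _ ≤ (2^n * loc e x)^p * aa n e := by gcongr
        _ = _ := by rw [ENNReal.mul_rpow_of_nonneg _ _ hp0.le]; ring
    · refine le_trans ?_ le_add_self
      calc _ ≤ (8^n * S x)^p * bigW n x := by
            gcongr
            exact h2.trans (mul_le_mul_right (hB x) _)
        _ = _ := by rw [ENNReal.mul_rpow_of_nonneg _ _ hp0.le]; ring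
  have hI2 : ∫⁻ x, ((8:ℝ≥0∞)^n)^p * (bigW n x * S x ^ p) ≤ ((8:ℝ≥0∞)^n)^p * C2 * ∫⁻ x, V x := by
    have hm4 : Measurable (fun x => bigW n x * S x ^ p) := hw.mul (hSm.pow_const p)
    rw [lintegral_const_mul _ hm4, mul_assoc]
    refine mul_le_mul_right ?_ _
    have := hC2 h hhm
    rw [lintegral_withDensity_eq_lintegral_mul _ hw (hSm.pow_const p)] at this
    exact this.trans (mul_le_mul_right hA _)
  have hI1 : ∫⁻ x, (∑' e, ((2:ℝ≥0∞)^n)^p * aa n e * (loc e x ^ p)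
        * (EE n e).indicator (fun _ => 1) x) ≤ ((2:ℝ≥0∞)^n)^p * C1 * ∫⁻ x, V x := by
    have hm5 : ∀ e, Measurable (fun x => ((2:ℝ≥0∞)^n)^p * aa n e * (loc e x ^ p)
        * (EE n e).indicator (fun _ => (1:ℝ≥0∞)) x) := fun e =>
      (((hlocm e).pow_const p).const_mul _).mul (measurable_const.indicator (hEm e))
    rw [lintegral_tsum fun e => (hm5 e).aemeasurable]
    calc _ ≤ ∑' e, ((2:ℝ≥0∞)^n)^p * C1 * ∫⁻ x, aa n e * ((EE n e).indicator f x ^ p) := by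
          refine ENNReal.tsum_le_tsum fun e => ?_
          calc _ ≤ ∫⁻ x, ((2:ℝ≥0∞)^n)^p * aa n e * (loc e x ^ p) := by
                refine lintegral_mono fun x => ?_
                refine (mul_le_mul_right (?_ : _ ≤ (1:ℝ≥0∞)) _).trans_eq (mul_one _)
                by_cases hx : x ∈ EE n e <;> simp [hx]
            _ = ((2:ℝ≥0∞)^n)^p * aa n e * ∫⁻ x, loc e x ^ p :=
                lintegral_const_mul _ ((hlocm e).pow_const p)
            _ ≤ ((2:ℝ≥0∞)^n)^p * aa n e * (C1 * ∫⁻ x, (EE n e).indicator f x ^ p) :=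
                mul_le_mul_right (hC1 _ (hf.indicator (hEm e))) _
            _ = _ := by
                rw [lintegral_const_mul _ ((hf.indicator (hEm e)).pow_const p)]; ring
      _ = ((2:ℝ≥0∞)^n)^p * C1 * ∫⁻ x, ∑' e, aa n e * ((EE n e).indicator f x ^ p) := by
          rw [ENNReal.tsum_mul_left, lintegral_tsum fun e =>
            (((hf.indicator (hEm e)).pow_const p).const_mul _).aemeasurable]
      _ ≤ _ := by
          refine mul_le_mul_right (lintegral_mono fun x => ?_) _
          refine le_trans (le_of_eq ?_) (hfw x)
          rw [bigW_tsum hn, ← ENNReal.tsum_mul_left]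
          refine tsum_congr fun e => ?_
          by_cases hx : x ∈ EE n e
          · simp [hx, mul_comm]
          · simp [hx, hp0]
  calc _ ≤ ∫⁻ x, ((∑' e, ((2:ℝ≥0∞)^n)^p * aa n e * (loc e x ^ p)
        * (EE n e).indicator (fun _ => 1) x) + ((8:ℝ≥0∞)^n)^p * (bigW n x * S x ^ p)) :=
        lintegral_mono hpt
    _ = _ := lintegral_add_right _ ((hw.mul (hSm.pow_const p)).const_mul _)
    _ ≤ ((2:ℝ≥0∞)^n)^p * C1 * (∫⁻ x, V x) + ((8:ℝ≥0∞)^n)^p * C2 * ∫⁻ x, V x :=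
        add_le_add hI1 hI2
    _ = (((2:ℝ≥0∞)^n)^p * C1 + ((8:ℝ≥0∞)^n)^p * C2) * ∫⁻ x, V x := by ring
    _ ≤ _ := mul_le_mul_left le_self_add _
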